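/- Let n ≥ 2 and let G be an almost controllable graph on Fin n. Then ξ(G) is a nonzero vector and every entry of ξ(G) is divisible by 2^{⌊n/2⌋−1}. -/

import Mathlib

/-!
Write `N = n + 2` for the number of vertices.

*Divisibility.* Modulo `2` the adjacency matrix is alternating and `⟨x, x⟩ = ⟨e, x⟩`, so
`⟨e, A^k e⟩` vanishes for every `k ≥ 1` (`one_dotProduct_pow_mulVec`). Hence the columns of `W` other
than `e` are orthogonal to all columns of `W`, and `W` has rank at most `⌈N/2⌉` modulo `2`
(`two_mul_rank_walkMatrix_le`). Each entry of `ξ` is up to sign an `(N-1)`-minor of `W`, so its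
matrix has corank at least `N - 1 - ⌈N/2⌉ = ⌊N/2⌋ - 1` modulo `2`, and a corank of `d` modulo `2`
gives a factor `2 ^ d` of the determinant (`two_pow_dvd_det`).

*Nonvanishing.* A dependency among `e, Ae, …, A^{N-2}e` could be shifted by multiplication with `A`,
producing two independent dependencies among the columns of `W`, against `rank W = N - 1`
(`linearIndependent_Vmat`). So the first `N - 1` columns have full rank and some maximal minor of
them is nonzero (`xiVec_ne_zero`).
-/

open Matrix

namespace AlmostControllableGraphs

variable {n : ℕ}

/-- The all-ones vector. -/
def eVec (m : ℕ) : Fin m → ℤ := fun _ => 1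

/-- The walk matrix `W(G) = [e, Ae, A²e, …, A^{n-1}e]` (columns indexed by `Fin (n+2)`). -/
def walkMatrix (A : Matrix (Fin (n + 2)) (Fin (n + 2)) ℤ) :
    Matrix (Fin (n + 2)) (Fin (n + 2)) ℤ :=
  Matrix.of fun i j => ((A ^ (j : ℕ)) *ᵥ eVec (n + 2)) i

/-- `G` is almost controllable if its walk matrix has rank `n - 1` over `ℚ`. -/
def IsAlmostControllable (A : Matrix (Fin (n + 2)) (Fin (n + 2)) ℤ) : Prop :=
  ((walkMatrix A).map ((↑) : ℤ → ℚ)).rank = n + 1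

/-- The matrix `V = [e, Ae, …, A^{n-2}e]`, the first `n - 1` columns of the walk matrix. -/
def Vmat (A : Matrix (Fin (n + 2)) (Fin (n + 2)) ℤ) :
    Matrix (Fin (n + 2)) (Fin (n + 1)) ℤ :=
  Matrix.of fun i j => walkMatrix A i j.castSucc

/-- The matrix obtained from `V` by deleting row `i`. -/
def Xmat (A : Matrix (Fin (n + 2)) (Fin (n + 2)) ℤ) (i : Fin (n + 2)) :
    Matrix (Fin (n + 1)) (Fin (n + 1)) ℤ :=
  Matrix.of fun r c => Vmat A (i.succAbove r) c

/-- The `(i, n)`-cofactor of the walk matrix: `(−1)^{n+i}` times the determinant of the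
matrix obtained by deleting row `i` and the last column from `W(G)`.
(In 0-based indexing the sign is `(−1)^{i + (n-1)}`.) -/
def cofactorLast (A : Matrix (Fin (n + 2)) (Fin (n + 2)) ℤ) (i : Fin (n + 2)) : ℤ :=
  (-1 : ℤ) ^ ((i : ℕ) + (n + 1)) * (Xmat A i).det

/-- The vector `ξ(G)` of last-column cofactors of the walk matrix. -/
def xiVec (A : Matrix (Fin (n + 2)) (Fin (n + 2)) ℤ) : Fin (n + 2) → ℤ :=
  fun i => cofactorLast A i

/-- The rational scalar `2^{1 - ⌊n/2⌋}`. -/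
def twoPow (n : ℕ) : ℚ := (2 : ℚ) ^ ((1 : ℤ) - (((n + 2) / 2 : ℕ) : ℤ))

/-- The matrix `W_δ(G) = [e, Ae, …, A^{n-2}e, (−1)^δ·2^{1-⌊n/2⌋}·ξ(G)]`. -/
def Wdelta (A : Matrix (Fin (n + 2)) (Fin (n + 2)) ℤ) (δ : ℕ) :
    Matrix (Fin (n + 2)) (Fin (n + 2)) ℚ :=
  Matrix.of fun i j =>
    if (j : ℕ) = n + 1 then (-1 : ℚ) ^ δ * twoPow n * (xiVec A i : ℚ)
    else ((walkMatrix A i j : ℤ) : ℚ)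

/-- A matrix is regular orthogonal if it is orthogonal and has all row sums equal to 1. -/
def IsRegularOrthogonal {K : Type*} [Field K] {m : ℕ} (Q : Matrix (Fin m) (Fin m) K) : Prop :=
  Qᵀ * Q = 1 ∧ Q *ᵥ (fun _ => (1 : K)) = fun _ => 1

/-- Adjacency matrix of the complement graph. -/
def complMat (A : Matrix (Fin (n + 2)) (Fin (n + 2)) ℤ) :
    Matrix (Fin (n + 2)) (Fin (n + 2)) ℤ :=
  Matrix.of fun i j => if i = j then 0 else 1 - A i j

/-- Two graphs are generalized cospectral if they are cospectral and so are their complements. -/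
def GenCospectral (A B : Matrix (Fin (n + 2)) (Fin (n + 2)) ℤ) : Prop :=
  A.charpoly = B.charpoly ∧ (complMat A).charpoly = (complMat B).charpoly

/-- `τ` and `τ'` are twins: the transposition swapping them is an automorphism. -/
def IsTwinPair (A : Matrix (Fin (n + 2)) (Fin (n + 2)) ℤ) (τ τ' : Fin (n + 2)) : Prop :=
  ∀ i j, A (Equiv.swap τ τ' i) (Equiv.swap τ τ' j) = A i j

/-- `λ₁(G) = −1` if the twins are adjacent and `0` otherwise; for a 0-1 matrix this
is `−A τ τ'`. -/
def lam1 (A : Matrix (Fin (n + 2)) (Fin (n + 2)) ℤ) (τ τ' : Fin (n + 2)) : ℤ :=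
  -(A τ τ')

/-- The vector `α(G)` with entry `−1` at `τ`, `1` at `τ'`, and `0` elsewhere. -/
def alphaVec (τ τ' : Fin (n + 2)) : Fin (n + 2) → ℤ :=
  fun i => if i = τ then -1 else if i = τ' then 1 else 0

/-- The reduction of `α(G)` modulo `p`. -/
def alphaVecMod (p : ℕ) (τ τ' : Fin (n + 2)) : Fin (n + 2) → ZMod p :=
  fun i => ((alphaVec τ τ' i : ℤ) : ZMod p)

/-- The matrix `Ŵ(G) = [e, Ae, …, A^{n-2}e, α(G)]`. -/
def hatW (A : Matrix (Fin (n + 2)) (Fin (n + 2)) ℤ) (τ τ' : Fin (n + 2)) :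
    Matrix (Fin (n + 2)) (Fin (n + 2)) ℤ :=
  Matrix.of fun i j => if (j : ℕ) = n + 1 then alphaVec τ τ' i else walkMatrix A i j

/-- The level of a rational matrix: the smallest positive integer `ℓ` such that `ℓQ` is
an integer matrix. -/
noncomputable def level {m : ℕ} (Q : Matrix (Fin m) (Fin m) ℚ) : ℕ :=
  sInf {k : ℕ | 0 < k ∧ ∀ i j, ((k : ℚ) * Q i j).den = 1}

/-- A permutation matrix. -/
def IsPermMatrix {m : ℕ} (Q : Matrix (Fin m) (Fin m) ℚ) : Prop :=
  ∃ σ : Equiv.Perm (Fin m), ∀ i j, Q i j = if σ i = j then 1 else 0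

/-- `G` is determined by its generalized spectrum: every graph generalized cospectral with
`G` is isomorphic to `G`. -/
def IsDGS (A : Matrix (Fin (n + 2)) (Fin (n + 2)) ℤ) : Prop :=
  ∀ B : Matrix (Fin (n + 2)) (Fin (n + 2)) ℤ, B.IsAdjMatrix → GenCospectral A B →
    ∃ σ : Equiv.Perm (Fin (n + 2)), ∀ i j, B i j = A (σ i) (σ j)

/-! ### Divisibility of a determinant by powers of two -/

lemma two_pow_dvd_det_of_cols {m : Type*} [Fintype m] [DecidableEq m] (M : Matrix m m ℤ)
    (S : Finset m) (h : ∀ j ∈ S, ∀ i, (2 : ℤ) ∣ M i j) : (2 : ℤ) ^ S.card ∣ M.det := by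
  have hM : M = Matrix.of fun i j =>
      (if j ∈ S then (2 : ℤ) else 1) * (if j ∈ S then M i j / 2 else M i j) := by
    ext i j
    by_cases hj : j ∈ S
    · simp [hj, Int.mul_ediv_cancel' (h j hj i)]
    · simp [hj]
  rw [hM]
  have := Matrix.det_mul_row (fun j => if j ∈ S then (2 : ℤ) else 1)
    (Matrix.of fun i j => if j ∈ S then M i j / 2 else M i j)
  simp only [Matrix.of_apply] at this
  rw [this, Finset.prod_ite_mem]
  simp

/-- Corank `d` modulo `2` forces a factor `2 ^ d` in the determinant: multiplying by lifts of
matrices that are invertible modulo `2` makes `d` columns even. -/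
lemma two_pow_dvd_det {m : ℕ} (M : Matrix (Fin m) (Fin m) ℤ) :
    (2 : ℤ) ^ (m - (M.map (Int.cast : ℤ → ZMod 2)).rank) ∣ M.det := by
  obtain ⟨V, U, e, hV, hU, h⟩ :=
    Matrix.exists_rank_normal_form (M.map (Int.cast : ℤ → ZMod 2))
  -- Integer lifts of matrices that are invertible modulo `2` have odd determinant.
  have lift : ∀ U : Matrix (Fin m) (Fin m) (ZMod 2), IsUnit U →
      ∃ U' : Matrix (Fin m) (Fin m) ℤ, U'.map (Int.cast : ℤ → ZMod 2) = U ∧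
        ∀ k : ℕ, IsCoprime ((2 : ℤ) ^ k) U'.det := by
    intro U hU
    refine ⟨U.map fun x => (x.val : ℤ), ?_, fun k => ?_⟩
    · ext i j
      simp
    · apply IsCoprime.pow_left
      rw [(Int.prime_two).coprime_iff_not_dvd]
      intro hd
      have h1 : ((U.map fun x => (x.val : ℤ)).det : ZMod 2) = U.det := by
        rw [Int.cast_det]
        congr 1
        ext i j
        simp
      rw [(ZMod.intCast_zmod_eq_zero_iff_dvd _ 2).2 (by exact_mod_cast hd)] at h1
      exact ((Matrix.isUnit_iff_isUnit_det _).1 hU).ne_zero h1.symm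
  obtain ⟨V', hV', hV2⟩ := lift V hV
  obtain ⟨U', hU', hU2⟩ := lift U hU
  let S : Finset (Fin m) := Finset.univ.filter fun j => (e j).isRight
  have hS : S.card = m - (M.map (Int.cast : ℤ → ZMod 2)).rank := by
    have : S = Finset.univ.map
        (Function.Embedding.inr.trans e.symm.toEmbedding) := by
      ext j
      simp only [S, Finset.mem_filter, Finset.mem_univ, true_and, Finset.mem_map,
        Function.Embedding.trans_apply, Function.Embedding.inr_apply, Equiv.coe_toEmbedding,
        Sum.isRight_iff, Equiv.symm_apply_eq]
      exact exists_congr fun _ => eq_comm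
    rw [this, Finset.card_map]
    simp
  have hdvd : (2 : ℤ) ^ S.card ∣ (V' * M * U').det := by
    apply two_pow_dvd_det_of_cols
    intro j hj i
    obtain ⟨b, hb⟩ := Sum.isRight_iff.1 (Finset.mem_filter.1 hj).2
    have h2 : (V' * M * U').map (Int.cast : ℤ → ZMod 2) =
        (fromBlocks 1 0 0 0).submatrix e e := by
      rw [← h, ← hV', ← hU']
      change (V' * M * U').map (Int.castRingHom (ZMod 2)) = _
      rw [Matrix.map_mul, Matrix.map_mul]
      rfl
    have h3 := congrFun (congrFun h2 i) j
    rw [Matrix.map_apply, Matrix.submatrix_apply, hb] at h3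
    have h4 : (((V' * M * U') i j : ℤ) : ZMod 2) = 0 := by
      rw [h3]
      rcases e i with a | a <;> simp
    exact_mod_cast (ZMod.intCast_zmod_eq_zero_iff_dvd _ 2).1 h4
  rw [← hS]
  rw [Matrix.det_mul, Matrix.det_mul] at hdvd
  exact (hV2 _).dvd_of_dvd_mul_left ((hU2 _).dvd_of_dvd_mul_right hdvd)

/-! ### The walk matrix modulo two -/

/-- A symmetric matrix with zero diagonal is alternating in characteristic two. -/
lemma dotProduct_mulVec_self_eq_zero {m : ℕ} (B : Matrix (Fin m) (Fin m) (ZMod 2))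
    (hs : B.IsSymm) (hd : ∀ i, B i i = 0) (x : Fin m → ZMod 2) : x ⬝ᵥ B *ᵥ x = 0 := by
  simp only [dotProduct, mulVec, Finset.mul_sum]
  rw [← Finset.sum_product']
  refine Finset.sum_involution (fun p _ => (p.2, p.1)) ?_ ?_ ?_ ?_
  · rintro ⟨i, j⟩ -
    have : x j * (B j i * x i) = x i * (B i j * x j) := by rw [hs.apply i j]; ring
    simp only [this]
    exact CharTwo.add_self_eq_zero _
  · rintro ⟨i, j⟩ - h heq
    obtain rfl : j = i := (Prod.ext_iff.1 heq).1
    simp [hd] at h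
  · simp
  · simp

lemma dotProduct_self_zmod_two {m : ℕ} (x : Fin m → ZMod 2) : x ⬝ᵥ x = 1 ⬝ᵥ x := by
  have h : ∀ a : ZMod 2, a * a = a := by decide
  simp [dotProduct, h]

lemma pow_mulVec_dotProduct {m : ℕ} (B : Matrix (Fin m) (Fin m) (ZMod 2))
    (hs : B.IsSymm) (i j : ℕ) (x y : Fin m → ZMod 2) :
    (B ^ i *ᵥ x) ⬝ᵥ (B ^ j *ᵥ y) = x ⬝ᵥ (B ^ (i + j) *ᵥ y) := by
  have h : (B ^ i)ᵀ = B ^ i := hs.pow i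
  rw [dotProduct_comm, dotProduct_mulVec, ← mulVec_transpose, h, mulVec_mulVec, ← pow_add,
    dotProduct_comm]

/-- For an adjacency matrix reduced modulo `2`, this says that the number of walks of any positive
length is even. -/
lemma one_dotProduct_pow_mulVec {m : ℕ} (B : Matrix (Fin m) (Fin m) (ZMod 2))
    (hs : B.IsSymm) (hd : ∀ i, B i i = 0) (k : ℕ) (hk : 0 < k) :
    (1 : Fin m → ZMod 2) ⬝ᵥ (B ^ k *ᵥ 1) = 0 := by
  induction k using Nat.strong_induction_on with
  | _ k ih =>
    obtain ⟨l, rfl | rfl⟩ := Nat.even_or_odd' k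
    · rw [two_mul, ← pow_mulVec_dotProduct B hs, dotProduct_self_zmod_two]
      exact ih l (by omega) (by omega)
    · have : 2 * l + 1 = l + (l + 1) := by ring
      rw [this, ← pow_mulVec_dotProduct B hs, pow_succ', ← mulVec_mulVec]
      exact dotProduct_mulVec_self_eq_zero B hs hd _

/-- Modulo `2` the columns of the walk matrix other than `e` are orthogonal to all its columns, so
the two column spaces, whose dimensions differ by at most one, have total dimension at most the
number of vertices. -/
lemma two_mul_rank_walkMatrix_le (A : Matrix (Fin (n + 2)) (Fin (n + 2)) ℤ)
    (hA : A.IsAdjMatrix) :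
    2 * ((walkMatrix A).map (Int.cast : ℤ → ZMod 2)).rank ≤ n + 3 := by
  set W := (walkMatrix A).map (Int.cast : ℤ → ZMod 2) with hW
  set B := A.map (Int.cast : ℤ → ZMod 2) with hB
  have hs : B.IsSymm := hA.symm.map _
  have hd : ∀ i, B i i = 0 := fun i => by simp [hB, hA.apply_diag]
  have hcol : ∀ j, W.col j = B ^ (j : ℕ) *ᵥ 1 := by
    intro j
    ext i
    have h1 : B ^ (j : ℕ) = (A ^ (j : ℕ)).map (Int.cast : ℤ → ZMod 2) :=
      (Matrix.map_pow A (Int.castRingHom (ZMod 2)) j).symm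
    rw [h1]
    simp [hW, walkMatrix, eVec, mulVec, dotProduct]
  let W' : Matrix (Fin (n + 2)) (Fin (n + 1)) (ZMod 2) := W.submatrix id Fin.succ
  have hmul : W'ᵀ * W = 0 := by
    ext i j
    have : (W'ᵀ * W) i j = W.col i.succ ⬝ᵥ W.col j := rfl
    rw [this, hcol, hcol, pow_mulVec_dotProduct B hs,
      one_dotProduct_pow_mulVec B hs hd _ (by simp)]
    rfl
  have h1 := Matrix.rank_add_rank_le_card_of_mul_eq_zero hmul
  rw [Matrix.rank_transpose, Fintype.card_fin] at h1
  have h2 : W.rank ≤ W'.rank + 1 := by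
    rw [Matrix.rank_eq_finrank_span_cols, Matrix.rank_eq_finrank_span_cols]
    calc _ ≤ Module.finrank (ZMod 2) ↥(Submodule.span (ZMod 2) (Set.range W'.col) ⊔
              Submodule.span (ZMod 2) {W.col 0}) := by
            apply Submodule.finrank_mono
            rw [Submodule.span_le]
            rintro _ ⟨j, rfl⟩
            refine Fin.cases ?_ (fun j => ?_) j
            · exact Submodule.mem_sup_right (Submodule.mem_span_singleton_self _)
            · exact Submodule.mem_sup_left (Submodule.subset_span ⟨j, rfl⟩)
      _ ≤ _ := (Submodule.finrank_add_le_finrank_add_finrank _ _).trans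
            (Nat.add_le_add_left ((finrank_span_le_card _).trans (by simp)) _)
  omega

/-! ### Nonvanishing of the cofactor vector -/

/-- The columns `e, Ae, …, A^{n-2}e` are independent over `ℚ`. A relation `c` among them gives two
relations `(c, 0)` and `(0, c)` among the columns of the walk matrix; as these relations form a
line, the two are proportional, which forces `c = 0`. -/
lemma linearIndependent_Vmat (A : Matrix (Fin (n + 2)) (Fin (n + 2)) ℤ)
    (hac : IsAlmostControllable A) :
    LinearIndependent ℚ ((Vmat A).map ((↑) : ℤ → ℚ)).col := by
  set W := (walkMatrix A).map ((↑) : ℤ → ℚ) with hW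
  set B := A.map ((↑) : ℤ → ℚ) with hB
  have hcol : ∀ j, W.col j = B ^ (j : ℕ) *ᵥ 1 := by
    intro j
    ext i
    have h1 : B ^ (j : ℕ) = (A ^ (j : ℕ)).map ((↑) : ℤ → ℚ) :=
      (Matrix.map_pow A (Int.castRingHom ℚ) j).symm
    rw [h1]
    simp [hW, walkMatrix, eVec, mulVec, dotProduct]
  have hker : Module.finrank ℚ (LinearMap.ker W.mulVecLin) = 1 := by
    have h1 := LinearMap.finrank_range_add_finrank_ker W.mulVecLin
    have h2 : Module.finrank ℚ (LinearMap.range W.mulVecLin) = n + 1 := hac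
    rw [h2, Module.finrank_fintype_fun_eq_card, Fintype.card_fin] at h1
    omega
  have hmem : ∀ d : Fin (n + 2) → ℚ, ∑ j, d j • (B ^ (j : ℕ) *ᵥ (1 : Fin (n + 2) → ℚ)) = 0 →
      d ∈ LinearMap.ker W.mulVecLin := by
    intro d h
    rw [LinearMap.mem_ker, Matrix.mulVecLin_apply, Matrix.mulVec_eq_sum, ← h]
    refine Finset.sum_congr rfl fun j _ => ?_
    rw [← hcol]
    simp [Matrix.col]
  rw [Fintype.linearIndependent_iff]
  intro c hc
  have hc' : ∑ j : Fin (n + 1), c j • (B ^ (j : ℕ) *ᵥ (1 : Fin (n + 2) → ℚ)) = 0 := by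
    rw [← hc]
    refine Finset.sum_congr rfl fun j _ => ?_
    have := hcol j.castSucc
    rw [Fin.val_castSucc] at this
    rw [← this]
    rfl
  have h1 : (Fin.snoc c 0 : Fin (n + 2) → ℚ) ∈ LinearMap.ker W.mulVecLin := by
    apply hmem
    rw [Fin.sum_univ_castSucc]
    simpa using hc'
  have h2 : (Fin.cons 0 c : Fin (n + 2) → ℚ) ∈ LinearMap.ker W.mulVecLin := by
    apply hmem
    rw [Fin.sum_univ_succ]
    have := congrArg (B *ᵥ ·) hc'
    simpa [Matrix.mulVec_sum, Matrix.mulVec_smul, mulVec_mulVec, ← pow_succ'] using this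
  by_contra! hne
  obtain ⟨i₀, hi₀⟩ := hne
  obtain ⟨t, ht⟩ := (finrank_eq_one_iff_of_nonzero'
    (⟨_, h1⟩ : LinearMap.ker W.mulVecLin) (by
      intro h0
      apply hi₀
      have := congrFun (congrArg Subtype.val h0) i₀.castSucc
      simpa using this)).1 hker ⟨_, h2⟩
  have ht' : ∀ j, t * (Fin.snoc c 0 : Fin (n + 2) → ℚ) j = (Fin.cons 0 c : Fin (n + 2) → ℚ) j :=
    fun j => congrFun (congrArg Subtype.val ht) j
  -- Comparing coordinates from the last one downwards annihilates every entry of `c`.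
  apply hi₀
  refine Fin.reverseInduction (motive := fun j => c j = 0) ?_ (fun j ih => ?_) i₀
  · have := ht' (Fin.last (n + 1))
    rw [Fin.snoc_last, mul_zero, ← Fin.succ_last, Fin.cons_succ] at this
    exact this.symm
  · have := ht' j.succ.castSucc
    rw [Fin.snoc_castSucc, ih, mul_zero, ← Fin.succ_castSucc, Fin.cons_succ] at this
    exact this.symm

/-- Bordering `V` by a column outside its column space gives an invertible matrix whose determinant
is a combination of the entries of `ξ`. -/
lemma xiVec_ne_zero (A : Matrix (Fin (n + 2)) (Fin (n + 2)) ℤ)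
    (hac : IsAlmostControllable A) : xiVec A ≠ 0 := by
  intro hxi
  have hV := linearIndependent_Vmat A hac
  set V := (Vmat A).map ((↑) : ℤ → ℚ) with hVdef
  obtain ⟨x, hx⟩ : ∃ x, x ∉ Submodule.span ℚ (Set.range V.col) := by
    by_contra! hall
    have h1 := finrank_range_le_card (R := ℚ) V.col
    rw [Set.finrank, (Submodule.eq_top_iff'.2 hall), finrank_top,
      Module.finrank_fintype_fun_eq_card] at h1
    simp at h1
  let M : Matrix (Fin (n + 2)) (Fin (n + 2)) ℚ := Matrix.of fun i j =>
    Fin.snoc (α := fun _ => Fin (n + 2) → ℚ) V.col x j i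
  have hM : LinearIndependent ℚ M.col := hV.finSnoc hx
  rw [Matrix.linearIndependent_cols_iff_isUnit, Matrix.isUnit_iff_isUnit_det] at hM
  apply hM.ne_zero
  rw [Matrix.det_succ_column M (Fin.last (n + 1))]
  refine Finset.sum_eq_zero fun i _ => ?_
  have hdet : (Xmat A i).det = 0 := by
    have h0 : (-1 : ℤ) ^ ((i : ℕ) + (n + 1)) * (Xmat A i).det = 0 := congrFun hxi i
    exact (mul_eq_zero.1 h0).resolve_left (pow_ne_zero _ (by norm_num))
  have hsub : M.submatrix i.succAbove (Fin.last (n + 1)).succAbove =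
      (Xmat A i).map ((↑) : ℤ → ℚ) := by
    ext r c
    simp only [M, Matrix.submatrix_apply, Matrix.of_apply, Fin.succAbove_last, Fin.snoc_castSucc]
    rfl
  rw [hsub, ← Int.cast_det, hdet]
  simp

/-- for an almost controllable graph, `ξ(G)` is nonzero and every entry is
divisible by `2^{⌊n/2⌋ - 1}`. -/
theorem xiVec_ne_zero_and_two_pow_dvd
    (n : ℕ) (A : Matrix (Fin (n + 2)) (Fin (n + 2)) ℤ)
    (hA : A.IsAdjMatrix) (hac : IsAlmostControllable A) :
    xiVec A ≠ 0 ∧ ∀ i, (2 : ℤ) ^ ((n + 2) / 2 - 1) ∣ xiVec A i := by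
  refine ⟨xiVec_ne_zero A hac, fun i => Dvd.dvd.mul_left ?_ _⟩
  refine (pow_dvd_pow 2 ?_).trans (two_pow_dvd_det (Xmat A i))
  have h1 := two_mul_rank_walkMatrix_le A hA
  have h2 : ((Xmat A i).map (Int.cast : ℤ → ZMod 2)).rank ≤
      ((walkMatrix A).map (Int.cast : ℤ → ZMod 2)).rank :=
    Matrix.rank_submatrix_le ((walkMatrix A).map (Int.cast : ℤ → ZMod 2))
      i.succAbove Fin.castSucc
  omega

end AlmostControllableGraphs
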